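/- Let 1 < p < ∞ with p ≠ 2. A linear operator T : ℝ² → ℝ² with operator norm ‖T‖ = 1 from ℓ^p_2 to ℓ^p_2 is an extreme point of the closed unit ball of L(ℓ^p_2, ℓ^p_2) if and only if either (a) T attains its norm on two linearly independent vectors, or (b) one of the following holds: if p > 2, T = e_i⊗y for some i ∈ {1,2} and some ℓ^p-unit vector y = (y1,y2) with y1·y2 ≠ 0; if p < 2, T = x^{p−1}⊗e_j for some j ∈ {1,2} and some ℓ^p-unit vector x = (x1,x2) with x1·x2 ≠ 0. -/

import Mathlib

/-!
Let `T` be a contraction of `ℓᵖ₂` carrying a unit vector `x` to a unit vector `y`. Because the unit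
sphere is smooth, `T` maps the tangent direction `w` at `x` to a multiple `σ u` of the tangent
direction `u` at `y` (`image_tangent`), so the contractions with `x ↦ y` form a one-parameter family
in `σ`, and near `x` contractivity reads `ψ (σ t) ≤ φ t` for small `t`, where
`φ t = ‖x + t w‖ᵖ` and `ψ t = ‖y + t u‖ᵖ`. For `x = ± eᵢ` the function is `1 + |t|ᵖ` (`aprof`); if
both coordinates are nonzero and `a = |x₁|ᵖ`, it is (`gprof`)
`1 + p(p-1)/2 · a(1-a) t² + p(p-1)(p-2)/6 · a(1-a)(2a-1) t³ + o(t³)`.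

If `T` attains its norm only along `x`, and the local inequality persists under small changes of
`σ`, then compactness of the sphere lets `T` move in both directions inside the unit ball, so `T` is
not extreme (`not_extreme`). This leaves a comparison of exponents.

* `x` and `y` both on the axes: the inequality is stable when `|σ| < 1`, and when `|σ| ≥ 1` the norm
  is attained off the line of `x`.
* `x` on an axis, `y` not: for `p < 2` the term `|t|ᵖ` dominates `t²` and the inequality is stable;
  for `p > 2` it forces `σ = 0`, and `T = eᵢ ⊗ (± y)`.
* `y` on an axis, `x` not: the same with the two ranges of `p` exchanged, and `σ = 0` gives
  `T = (± x)^{p-1} ⊗ eⱼ`.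
* neither on an axis: if the second-order terms differ, the inequality is stable. If they agree, the
  third-order terms must agree as well; here `p ≠ 2` enters. The two equalities give `σ = ± 1` and
  `ψ (σ t) = φ t` for all `t` (`gprof_rigid`), so the norm is attained off the line of `x`.

Conversely, strict convexity shows that the ends of a segment of contractions through `T` agree with
`T` wherever `T` attains its norm (`app_eq_of_openSegment`). Two independent such vectors determine
`T`; for the rank-one operators one vector suffices, because the local inequality only allows
`σ = 0` (`extreme_of_rank_one`).
-/

noncomputable section

/-- The ℓ^r norm on ℝ². -/
def pnorm (r : ℝ) (z : ℝ × ℝ) : ℝ := (|z.1| ^ r + |z.2| ^ r) ^ (1 / r)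

/-- Apply a 2×2 real matrix, viewed as a linear operator ℝ² → ℝ², to a vector. -/
def app (A : Matrix (Fin 2) (Fin 2) ℝ) (z : ℝ × ℝ) : ℝ × ℝ :=
  (A 0 0 * z.1 + A 0 1 * z.2, A 1 0 * z.1 + A 1 1 * z.2)

/-- Operator norm from ℓ^p_2 to ℓ^q_2. -/
def opNorm (p q : ℝ) (A : Matrix (Fin 2) (Fin 2) ℝ) : ℝ :=
  sSup {c : ℝ | ∃ z : ℝ × ℝ, pnorm p z = 1 ∧ c = pnorm q (app A z)}

/-- Closed unit ball of L(ℓ^p_2, ℓ^q_2). -/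
def unitBall (p q : ℝ) : Set (Matrix (Fin 2) (Fin 2) ℝ) := {A | opNorm p q A ≤ 1}

/-- The rank-one operator u ⊗ v : z ↦ (u·z)·v. -/
def tensor (u v : ℝ × ℝ) : Matrix (Fin 2) (Fin 2) ℝ :=
  !![v.1 * u.1, v.1 * u.2; v.2 * u.1, v.2 * u.2]

/-- Signed power of a vector: (sgn z1 |z1|^r, sgn z2 |z2|^r). -/
def spow (z : ℝ × ℝ) (r : ℝ) : ℝ × ℝ :=
  (Real.sign z.1 * |z.1| ^ r, Real.sign z.2 * |z.2| ^ r)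

/-- Rotation: z^o = (−z2, z1). -/
def rot (z : ℝ × ℝ) : ℝ × ℝ := (-z.2, z.1)

open Filter Topology Asymptotics

/-! ### Expansions and bounds of the norm along a line -/

lemma abs_one_add_rpow_taylor (p : ℝ) :
    (fun h : ℝ => |1 + h| ^ p -
      (1 + p * h + p * (p - 1) / 2 * h ^ 2 + p * (p - 1) * (p - 2) / 6 * h ^ 3))
      =o[𝓝 0] fun h : ℝ => h ^ 3 := by
  have h1 := (Real.one_add_rpow_hasFPowerSeriesAt_zero (a := p)).isBigO_sub_partialSum_pow 4
  have h2 : (fun h : ℝ => |1 + h| ^ p -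
      (1 + p * h + p * (p - 1) / 2 * h ^ 2 + p * (p - 1) * (p - 2) / 6 * h ^ 3))
      =O[𝓝 0] fun h : ℝ => ‖h‖ ^ 4 := by
    refine h1.congr' ?_ EventuallyEq.rfl
    have : ∀ᶠ h : ℝ in 𝓝 0, -1 < h := lt_mem_nhds (by norm_num)
    filter_upwards [this] with h hh
    rw [abs_of_pos (by linarith)]
    have c2 : Ring.choose p 2 = p * (p - 1) / 2 := by
      rw [Ring.choose_eq_smul]
      simp [descPochhammer, Nat.factorial, ← Polynomial.aeval_eq_smeval]
      ring
    have c3 : Ring.choose p 3 = p * (p - 1) * (p - 2) / 6 := by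
      rw [Ring.choose_eq_smul]
      simp [descPochhammer, Nat.factorial, ← Polynomial.aeval_eq_smeval]
      ring
    simp only [FormalMultilinearSeries.partialSum, Finset.sum_range_succ, Finset.sum_range_zero,
      binomialSeries_apply, c2, c3, Ring.choose_zero_right, Ring.choose_one_right,
      List.ofFn_const, List.prod_replicate, smul_eq_mul, zero_add]
    ring
  refine h2.trans_isLittleO ?_
  simp_rw [← norm_pow]
  exact (isLittleO_pow_pow (by norm_num : 3 < 4)).norm_left

lemma one_add_mul_le_abs_rpow {p : ℝ} (hp : 1 < p) (s : ℝ) : 1 + p * s ≤ |1 + s| ^ p := by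
  rcases le_or_gt (-1) s with h | h
  · rw [abs_of_nonneg (by linarith)]
    exact one_add_mul_self_le_rpow_one_add h hp.le
  · have : 1 + p * s ≤ 0 := by nlinarith
    exact this.trans (by positivity)

lemma abs_rpow_eq_sq (p s : ℝ) : |1 + s| ^ p = (1 + (2 * s + s ^ 2)) ^ (p / 2) := by
  rw [show 1 + (2 * s + s ^ 2) = |1 + s| ^ (2 : ℝ) by norm_cast; rw [sq_abs]; ring,
    ← Real.rpow_mul (abs_nonneg _)]
  congr 1; ring

/-- For `p > 2` Bernoulli's inequality, applied to `(1 + s)²` and the exponent `p / 2 > 1`,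
yields a global quadratic lower bound. -/
lemma quad_le_abs_rpow {p : ℝ} (hp : 2 < p) (s : ℝ) :
    1 + p * s + p / 2 * s ^ 2 ≤ |1 + s| ^ p := by
  rw [abs_rpow_eq_sq]
  have := one_add_mul_self_le_rpow_one_add (s := 2 * s + s ^ 2) (by nlinarith [sq_nonneg (1 + s)])
    (p := p / 2) (by linarith)
  linarith

/-- For `p < 2` Bernoulli's inequality, applied to `(1 + s)²` and the exponent `p / 2 < 1`,
yields a global quadratic upper bound. -/
lemma abs_rpow_le_quad {p : ℝ} (hp : 1 < p) (hp2 : p < 2) (s : ℝ) :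
    |1 + s| ^ p ≤ 1 + p * s + p / 2 * s ^ 2 := by
  rw [abs_rpow_eq_sq]
  have := rpow_one_add_le_one_add_mul_self (s := 2 * s + s ^ 2)
    (by nlinarith [sq_nonneg (1 + s)]) (p := p / 2) (by linarith) (by linarith)
  linarith

/-- The function `t ↦ ‖x + t w‖ᵖ` for a unit vector `x` with nonzero coordinates, where
`a = |x₁|ᵖ` and `w = (-|x₂|ᵖ x₁, |x₁|ᵖ x₂)`. -/
def gprof (p a t : ℝ) : ℝ := a * |1 - (1 - a) * t| ^ p + (1 - a) * |1 + a * t| ^ p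

/-- The function `t ↦ ‖x + t w‖ᵖ` for unit vectors `x` and `w` on the two coordinate axes. -/
def aprof (p t : ℝ) : ℝ := 1 + |t| ^ p

lemma gprof_taylor (p a : ℝ) :
    (fun t : ℝ => gprof p a t - (1 + p * (p - 1) / 2 * (a * (1 - a)) * t ^ 2
      + p * (p - 1) * (p - 2) / 6 * (a * (1 - a) * (2 * a - 1)) * t ^ 3))
      =o[𝓝 0] fun t : ℝ => t ^ 3 := by
  have key : ∀ k : ℝ, (fun t : ℝ => |1 + k * t| ^ p - (1 + p * (k * t)
      + p * (p - 1) / 2 * (k * t) ^ 2 + p * (p - 1) * (p - 2) / 6 * (k * t) ^ 3))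
      =o[𝓝 0] fun t : ℝ => t ^ 3 := by
    intro k
    have hk : Tendsto (fun t : ℝ => k * t) (𝓝 0) (𝓝 0) := by
      have : ContinuousAt (fun t : ℝ => k * t) 0 := by fun_prop
      simpa [ContinuousAt] using this
    refine ((abs_one_add_rpow_taylor p).comp_tendsto hk).trans_isBigO ?_
    simp only [Function.comp_def, mul_pow]
    exact isBigO_const_mul_self _ _ _
  refine (((key (-(1 - a))).const_mul_left a).add ((key a).const_mul_left (1 - a))).congr_left ?_
  intro t
  simp only [gprof]
  rw [show 1 - (1 - a) * t = 1 + -(1 - a) * t by ring]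
  ring

lemma one_le_gprof {p a : ℝ} (hp : 1 < p) (ha : 0 < a) (ha1 : a < 1) (t : ℝ) :
    1 ≤ gprof p a t := by
  have h1 := one_add_mul_le_abs_rpow hp (-((1 - a) * t))
  have h2 := one_add_mul_le_abs_rpow hp (a * t)
  rw [← sub_eq_add_neg] at h1
  unfold gprof
  nlinarith [mul_le_mul_of_nonneg_left h1 ha.le,
    mul_le_mul_of_nonneg_left h2 (by linarith : 0 ≤ 1 - a)]

lemma quad_le_gprof {p a : ℝ} (hp : 2 < p) (ha : 0 < a) (ha1 : a < 1) (t : ℝ) :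
    1 + p / 2 * (a * (1 - a)) * t ^ 2 ≤ gprof p a t := by
  have h1 := quad_le_abs_rpow hp (-((1 - a) * t))
  have h2 := quad_le_abs_rpow hp (a * t)
  rw [← sub_eq_add_neg] at h1
  unfold gprof
  have h3 := mul_le_mul_of_nonneg_left h1 ha.le
  have h4 := mul_le_mul_of_nonneg_left h2 (by linarith : 0 ≤ 1 - a)
  linear_combination h3 + h4

lemma gprof_le_quad {p a : ℝ} (hp : 1 < p) (hp2 : p < 2) (ha : 0 < a) (ha1 : a < 1) (t : ℝ) :
    gprof p a t ≤ 1 + p / 2 * (a * (1 - a)) * t ^ 2 := by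
  have h1 := abs_rpow_le_quad hp hp2 (-((1 - a) * t))
  have h2 := abs_rpow_le_quad hp hp2 (a * t)
  rw [← sub_eq_add_neg] at h1
  unfold gprof
  have h3 := mul_le_mul_of_nonneg_left h1 ha.le
  have h4 := mul_le_mul_of_nonneg_left h2 (by linarith : 0 ≤ 1 - a)
  linear_combination h3 + h4

lemma hasDerivAt_gprof {p a : ℝ} : HasDerivAt (gprof p a) 0 0 := by
  have h : (fun t : ℝ => gprof p a t - gprof p a 0 - (t - 0) • (0 : ℝ)) =o[𝓝 0]
      fun t : ℝ => t - 0 := by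
    have h1 := (gprof_taylor p a).trans (isLittleO_pow_pow (by norm_num : 1 < 3))
    have h2 : (fun t : ℝ => t ^ 2) =o[𝓝 0] fun t : ℝ => t ^ 1 :=
      isLittleO_pow_pow (by norm_num)
    have h3 : (fun t : ℝ => t ^ 3) =o[𝓝 0] fun t : ℝ => t ^ 1 :=
      isLittleO_pow_pow (by norm_num)
    refine ((h1.add (h2.const_mul_left (p * (p - 1) / 2 * (a * (1 - a))))).add
      (h3.const_mul_left
        (p * (p - 1) * (p - 2) / 6 * (a * (1 - a) * (2 * a - 1))))).congr ?_ ?_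
    · intro t
      have : gprof p a 0 = 1 := by simp [gprof]
      rw [this, smul_eq_mul]; ring
    · intro t; ring
  exact hasDerivAt_iff_isLittleO.2 h

lemma hasDerivAt_aprof {p : ℝ} (hp : 1 < p) : HasDerivAt (aprof p) 0 0 := by
  have := (hasDerivAt_abs_rpow 0 hp).const_add 1
  simp only [mul_zero] at this
  exact this

lemma abs_rpow_split {p : ℝ} (t : ℝ) (ht : t ≠ 0) (r : ℝ) :
    |t| ^ p * |t| ^ (r - p) = |t| ^ r := by
  rw [← Real.rpow_add (abs_pos.2 ht)]; congr 1; ring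

/-! ### Comparison of the norm along two lines -/

/-- A nonnegative function `A t² + B t³ + o(t³)` with `A ≤ 0` has `A = 0`, and then `B = 0` because
`t³` changes sign. -/
lemma coeffs_zero {A B : ℝ} {f : ℝ → ℝ} (hf : ∀ t, 0 ≤ f t) (hA : A ≤ 0)
    (h : (fun t => f t - (A * t ^ 2 + B * t ^ 3)) =o[𝓝 0] fun t : ℝ => t ^ 3) :
    A = 0 ∧ B = 0 := by
  have hA0 : A = 0 := by
    by_contra hne
    have hA' : A < 0 := lt_of_le_of_ne hA hne
    have h2 : (fun t => f t - A * t ^ 2) =o[𝓝 0] fun t : ℝ => t ^ 2 := by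
      have h3 : (fun t : ℝ => t ^ 3) =o[𝓝 0] fun t : ℝ => t ^ 2 :=
        isLittleO_pow_pow (by norm_num)
      refine ((h.trans h3).add (h3.const_mul_left B)).congr_left ?_
      intro t; ring
    have h4 := h2.bound (show 0 < -A / 2 by linarith)
    obtain ⟨ε, hε, H⟩ := Metric.eventually_nhds_iff.1 h4
    have := H (y := ε / 2) (by simp [abs_of_pos hε]; linarith)
    simp only [Real.norm_eq_abs, abs_pow, sq_abs] at this
    have := (abs_le.1 this).2
    have h5 := hf (ε / 2)
    have : 0 < (ε / 2) ^ 2 := by positivity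
    nlinarith
  refine ⟨hA0, ?_⟩
  subst hA0
  by_contra hB
  have h4 := h.bound (show 0 < |B| / 2 by positivity)
  obtain ⟨ε, hε, H⟩ := Metric.eventually_nhds_iff.1 h4
  have main : ∀ t, dist t 0 < ε → 0 < |t| ^ 3 → B * t ^ 3 = -(|B| * |t| ^ 3) → False := by
    intro t ht h0 hBt
    have := H ht
    rw [Real.norm_eq_abs, Real.norm_eq_abs, abs_pow] at this
    have := (abs_le.1 this).2
    have h5 := hf t
    have : 0 < |B| * |t| ^ 3 := by positivity
    nlinarith
  rcases lt_or_gt_of_ne hB with hB | hB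
  · refine main (ε / 2) (by simp [abs_of_pos hε]; linarith) (by positivity) ?_
    rw [abs_of_neg hB, abs_of_pos (by positivity : 0 < ε / 2)]; ring
  · refine main (-(ε / 2)) (by simp [abs_of_pos hε]; linarith)
      (by rw [abs_neg]; positivity) ?_
    rw [abs_of_pos hB, abs_neg, abs_of_pos (by positivity : 0 < ε / 2)]; ring

/-- If the inequality holds although the second-order term on the left is at least that on the
right, then the two curves coincide. The second and third order terms have to agree, and for `p ≠ 2`
this leaves only `σ = 1`, `c = a` and `σ = -1`, `c = 1 - a`. -/
lemma gprof_rigid {p a c σ : ℝ} (hp : 1 < p) (hp2 : p ≠ 2) (ha : 0 < a) (ha1 : a < 1)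
    (hle : ∀ t, gprof p c (σ * t) ≤ gprof p a t)
    (hσ : a * (1 - a) ≤ σ ^ 2 * (c * (1 - c))) :
    ∀ t, gprof p c (σ * t) = gprof p a t := by
  have hs : Tendsto (fun t : ℝ => σ * t) (𝓝 0) (𝓝 0) := by
    have : ContinuousAt (fun t : ℝ => σ * t) 0 := by fun_prop
    simpa [ContinuousAt] using this
  have h1 : (fun t : ℝ => gprof p c (σ * t) - (1 + p * (p - 1) / 2 * (c * (1 - c)) * (σ * t) ^ 2
      + p * (p - 1) * (p - 2) / 6 * (c * (1 - c) * (2 * c - 1)) * (σ * t) ^ 3))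
      =o[𝓝 0] fun t : ℝ => t ^ 3 := by
    refine ((gprof_taylor p c).comp_tendsto hs).trans_isBigO ?_
    simp only [Function.comp_def, mul_pow]
    exact isBigO_const_mul_self _ _ _
  have hk : 0 < p * (p - 1) / 2 := by
    have : 0 < p - 1 := by linarith
    positivity
  have hk3 : p * (p - 1) * (p - 2) / 6 ≠ 0 := by
    have : p - 1 ≠ 0 := by linarith
    have : p - 2 ≠ 0 := sub_ne_zero.2 hp2
    have : p ≠ 0 := by linarith
    positivity
  obtain ⟨e2, e3⟩ := coeffs_zero (f := fun t => gprof p a t - gprof p c (σ * t))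
    (A := p * (p - 1) / 2 * (a * (1 - a) - σ ^ 2 * (c * (1 - c))))
    (B := p * (p - 1) * (p - 2) / 6 *
      (a * (1 - a) * (2 * a - 1) - σ ^ 3 * (c * (1 - c) * (2 * c - 1))))
    (fun t => by have := hle t; linarith)
    (by nlinarith)
    (((gprof_taylor p a).sub h1).congr_left (fun t => by ring))
  have e2 := (mul_eq_zero.1 e2).resolve_left hk.ne'
  have e3 := (mul_eq_zero.1 e3).resolve_left hk3
  have hab : 0 < a * (1 - a) := mul_pos ha (by linarith)
  -- with `A = a(1-a)` and `C = c(1-c)`: `e2` says `A = σ² C`, `e3` says `A(2a-1) = σ³ C(2c-1)`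
  have e4 : 2 * a - 1 = σ * (2 * c - 1) := by
    apply mul_left_cancel₀ hab.ne'
    linear_combination e3 - σ * (2 * c - 1) * e2
  -- `(2a-1)² = 1 - 4 a(1-a)`, so squaring `e4` and using `e2` leaves `1 = σ²`
  have e5 : σ ^ 2 = 1 := by
    linear_combination (-4) * e2 - (2 * a - 1 + σ * (2 * c - 1)) * e4
  intro t
  rcases (sq_eq_sq_iff_eq_or_eq_neg.1 (e5.trans (one_pow 2).symm)) with rfl | rfl
  · have : c = a := by linarith
    subst this; rw [one_mul]
  · have : c = 1 - a := by linarith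
    subst this
    unfold gprof
    rw [show 1 - (1 - (1 - a)) * (-1 * t) = 1 + a * t by ring,
      show 1 + (1 - a) * (-1 * t) = 1 - (1 - a) * t by ring]
    ring

/-- A strict inequality between the second-order terms makes the local norm inequality stable
in `σ`. -/
lemma gprof_comparison {p a c σ : ℝ} (hp : 1 < p) (hσ : σ ^ 2 * (c * (1 - c)) < a * (1 - a)) :
    ∀ᶠ q : ℝ × ℝ in 𝓝 (σ, 0), gprof p c (q.1 * q.2) ≤ gprof p a q.2 := by
  set k := p * (p - 1) / 2 with hkdef
  have hk : 0 < k := by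
    have : 0 < p - 1 := by linarith
    positivity
  have two : ∀ a : ℝ, (fun t : ℝ => gprof p a t - (1 + k * (a * (1 - a)) * t ^ 2))
      =o[𝓝 0] fun t : ℝ => t ^ 2 := by
    intro a
    have h3 : (fun t : ℝ => t ^ 3) =o[𝓝 0] fun t : ℝ => t ^ 2 :=
      isLittleO_pow_pow (by norm_num)
    refine (((gprof_taylor p a).trans h3).add (h3.const_mul_left
      (p * (p - 1) * (p - 2) / 6 * (a * (1 - a) * (2 * a - 1))))).congr_left ?_
    intro t; ring
  obtain ⟨η, hη, hη'⟩ : ∃ η : ℝ, 0 < η ∧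
      (k * (c * (1 - c)) + η) * σ ^ 2 < k * (a * (1 - a)) - η := by
    have hd : 0 < k * (a * (1 - a) - σ ^ 2 * (c * (1 - c))) := mul_pos hk (by linarith)
    refine ⟨k * (a * (1 - a) - σ ^ 2 * (c * (1 - c))) / (2 * (σ ^ 2 + 1)), by positivity, ?_⟩
    have : k * (a * (1 - a) - σ ^ 2 * (c * (1 - c))) / (2 * (σ ^ 2 + 1)) * (σ ^ 2 + 1)
        = k * (a * (1 - a) - σ ^ 2 * (c * (1 - c))) / 2 := by
      field_simp
    nlinarith
  have b1 : ∀ᶠ q : ℝ × ℝ in 𝓝 (σ, 0), ‖gprof p c (q.1 * q.2) -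
      (1 + k * (c * (1 - c)) * (q.1 * q.2) ^ 2)‖ ≤ η * ‖(q.1 * q.2) ^ 2‖ := by
    have ht : Tendsto (fun q : ℝ × ℝ => q.1 * q.2) (𝓝 (σ, 0)) (𝓝 0) := by
      have : ContinuousAt (fun q : ℝ × ℝ => q.1 * q.2) (σ, 0) := by fun_prop
      simpa [ContinuousAt] using this
    exact ht.eventually ((two c).bound hη)
  have b2 : ∀ᶠ q : ℝ × ℝ in 𝓝 (σ, 0), ‖gprof p a q.2 -
      (1 + k * (a * (1 - a)) * q.2 ^ 2)‖ ≤ η * ‖q.2 ^ 2‖ := by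
    have ht : Tendsto (fun q : ℝ × ℝ => q.2) (𝓝 (σ, 0)) (𝓝 0) := continuous_snd.tendsto' _ _ rfl
    exact ht.eventually ((two a).bound hη)
  have b3 : ∀ᶠ q : ℝ × ℝ in 𝓝 (σ, 0),
      (k * (c * (1 - c)) + η) * q.1 ^ 2 < k * (a * (1 - a)) - η := by
    have : ContinuousAt (fun q : ℝ × ℝ => (k * (c * (1 - c)) + η) * q.1 ^ 2) (σ, 0) := by
      fun_prop
    exact this.eventually_lt continuousAt_const hη'
  filter_upwards [b1, b2, b3] with q h1 h2 h3
  simp only [Real.norm_eq_abs, abs_pow, sq_abs] at h1 h2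
  have h1 := (abs_le.1 h1).2
  have h2 := (abs_le.1 h2).1
  nlinarith [mul_le_mul_of_nonneg_right h3.le (sq_nonneg q.2)]

lemma aprof_comparison {p σ : ℝ} (hp : 1 < p) (hσ : |σ| < 1) :
    ∀ᶠ q : ℝ × ℝ in 𝓝 (σ, 0), aprof p (q.1 * q.2) ≤ aprof p q.2 := by
  have : ContinuousAt (fun q : ℝ × ℝ => |q.1|) (σ, 0) := by fun_prop
  filter_upwards [this.eventually_lt continuousAt_const hσ] with q hq
  have : |q.1 * q.2| ≤ |q.2| := by
    rw [abs_mul]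
    nlinarith [abs_nonneg q.2]
  have := Real.rpow_le_rpow (abs_nonneg _) this (by linarith : 0 ≤ p)
  unfold aprof
  linarith

/-- For `p < 2` the term `|t|ᵖ` dominates `t²`, so the local inequality is stable at every `σ`. -/
lemma gprof_le_aprof_comparison {p c σ : ℝ} (hp : 1 < p) (hp2 : p < 2) (hc : 0 < c) (hc1 : c < 1) :
    ∀ᶠ q : ℝ × ℝ in 𝓝 (σ, 0), gprof p c (q.1 * q.2) ≤ aprof p q.2 := by
  have hcont : ContinuousAt (fun q : ℝ × ℝ =>
      p / 2 * (c * (1 - c)) * q.1 ^ 2 * |q.2| ^ (2 - p)) (σ, 0) := by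
    have : ContinuousAt (fun q : ℝ × ℝ => |q.2| ^ (2 - p)) (σ, 0) :=
      ContinuousAt.rpow_const (by fun_prop) (Or.inr (by linarith))
    fun_prop
  have h0 : p / 2 * (c * (1 - c)) * σ ^ 2 * |(0 : ℝ)| ^ (2 - p) < 1 := by
    rw [abs_zero, Real.zero_rpow (by linarith)]; simp
  filter_upwards [hcont.eventually_lt continuousAt_const h0] with q hq
  refine (gprof_le_quad hp hp2 hc hc1 _).trans ?_
  unfold aprof
  rcases eq_or_ne q.2 0 with h | h
  · simp [h]; positivity
  · have e := abs_rpow_split (p := p) q.2 h 2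
    rw [Real.rpow_two, sq_abs] at e
    have : 0 ≤ |q.2| ^ p := by positivity
    rw [mul_pow, ← e]
    nlinarith

/-- For `p > 2` the term `t²` dominates `|t|ᵖ`, so the local inequality is stable at every `σ`. -/
lemma aprof_le_gprof_comparison {p a σ : ℝ} (hp2 : 2 < p) (ha : 0 < a) (ha1 : a < 1) :
    ∀ᶠ q : ℝ × ℝ in 𝓝 (σ, 0), aprof p (q.1 * q.2) ≤ gprof p a q.2 := by
  have hcont : ContinuousAt (fun q : ℝ × ℝ => |q.1| ^ p * |q.2| ^ (p - 2)) (σ, 0) := by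
    have h1 : ContinuousAt (fun q : ℝ × ℝ => |q.2| ^ (p - 2)) (σ, 0) :=
      ContinuousAt.rpow_const (by fun_prop) (Or.inr (by linarith))
    have h2 : ContinuousAt (fun q : ℝ × ℝ => |q.1| ^ p) (σ, 0) :=
      ContinuousAt.rpow_const (by fun_prop) (Or.inr (by linarith))
    exact h2.mul h1
  have h0 : |σ| ^ p * |(0 : ℝ)| ^ (p - 2) < p / 2 * (a * (1 - a)) := by
    rw [abs_zero, Real.zero_rpow (by linarith)]
    have : 0 < 1 - a := by linarith
    rw [mul_zero]; positivity
  filter_upwards [hcont.eventually_lt continuousAt_const h0] with q hq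
  refine le_trans ?_ (quad_le_gprof hp2 ha ha1 _)
  unfold aprof
  rw [abs_mul, Real.mul_rpow (abs_nonneg _) (abs_nonneg _)]
  rcases eq_or_ne q.2 0 with h | h
  · rw [h, abs_zero, Real.zero_rpow (by linarith)]; simp
  · have e := abs_rpow_split (p := 2) q.2 h p
    rw [Real.rpow_two, sq_abs] at e
    rw [← e]
    nlinarith [sq_nonneg q.2]

lemma eq_zero_of_gprof_le_aprof {p c σ : ℝ} (hp2 : 2 < p) (hc : 0 < c) (hc1 : c < 1)
    (h : ∀ t, gprof p c (σ * t) ≤ aprof p t) : σ = 0 := by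
  by_contra hσ
  have hcont : ContinuousAt (fun t : ℝ => |t| ^ (p - 2)) 0 :=
    ContinuousAt.rpow_const (by fun_prop) (Or.inr (by linarith))
  have hpos : 0 < p / 2 * (c * (1 - c)) * σ ^ 2 := by
    have : 0 < 1 - c := by linarith
    positivity
  have h0 : |(0 : ℝ)| ^ (p - 2) < p / 2 * (c * (1 - c)) * σ ^ 2 := by
    rw [abs_zero, Real.zero_rpow (by linarith)]; exact hpos
  obtain ⟨ε, hε, H⟩ := Metric.eventually_nhds_iff.1 (hcont.eventually_lt continuousAt_const h0)
  have h1 := H (y := ε / 2) (by simp [abs_of_pos hε]; linarith)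
  have h2 := (quad_le_gprof hp2 hc hc1 _).trans (h (ε / 2))
  have e := abs_rpow_split (p := 2) (ε / 2) (by positivity) p
  rw [Real.rpow_two, sq_abs] at e
  unfold aprof at h2
  rw [← e] at h2
  have : 0 < (ε / 2) ^ 2 := by positivity
  nlinarith

lemma eq_zero_of_aprof_le_gprof {p a σ : ℝ} (hp : 1 < p) (hp2 : p < 2) (ha : 0 < a) (ha1 : a < 1)
    (h : ∀ t, aprof p (σ * t) ≤ gprof p a t) : σ = 0 := by
  by_contra hσ
  have hcont : ContinuousAt (fun t : ℝ => p / 2 * (a * (1 - a)) * |t| ^ (2 - p)) 0 :=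
    continuousAt_const.mul (ContinuousAt.rpow_const (by fun_prop) (Or.inr (by linarith)))
  have hpos : 0 < |σ| ^ p := by positivity
  have h0 : p / 2 * (a * (1 - a)) * |(0 : ℝ)| ^ (2 - p) < |σ| ^ p := by
    rw [abs_zero, Real.zero_rpow (by linarith)]; simpa using hpos
  obtain ⟨ε, hε, H⟩ := Metric.eventually_nhds_iff.1 (hcont.eventually_lt continuousAt_const h0)
  have h1 := H (y := ε / 2) (by simp [abs_of_pos hε]; linarith)
  have h2 := (h (ε / 2)).trans (gprof_le_quad hp hp2 ha ha1 _)
  have e := abs_rpow_split (p := p) (ε / 2) (by positivity) 2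
  rw [Real.rpow_two, sq_abs] at e
  unfold aprof at h2
  rw [← e, abs_mul, Real.mul_rpow (abs_nonneg _) (abs_nonneg _)] at h2
  have : 0 < |ε / 2| ^ p := by positivity
  nlinarith

/-! ### The `p`-th power of the norm and the unit ball -/

/-- `‖z‖ᵖ` for the `ℓᵖ` norm. -/
def powNorm (p : ℝ) (z : ℝ × ℝ) : ℝ := |z.1| ^ p + |z.2| ^ p

lemma powNorm_nonneg (p : ℝ) (z : ℝ × ℝ) : 0 ≤ powNorm p z := by unfold powNorm; positivity

lemma pnorm_eq_iff {p : ℝ} (hp : 1 < p) (z w : ℝ × ℝ) :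
    pnorm p z = pnorm p w ↔ powNorm p z = powNorm p w :=
  Real.rpow_left_inj (powNorm_nonneg p z) (powNorm_nonneg p w) (one_div_pos.2 (by linarith)).ne'

lemma pnorm_eq_one_iff {p : ℝ} (hp : 1 < p) (z : ℝ × ℝ) : pnorm p z = 1 ↔ powNorm p z = 1 := by
  rw [← Real.rpow_left_inj (powNorm_nonneg p z) zero_le_one (z := 1 / p) (by positivity),
    Real.one_rpow]
  rfl

lemma pnorm_le_one_iff {p : ℝ} (hp : 1 < p) (z : ℝ × ℝ) : pnorm p z ≤ 1 ↔ powNorm p z ≤ 1 := by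
  rw [← Real.rpow_le_rpow_iff (powNorm_nonneg p z) zero_le_one (z := 1 / p) (by positivity),
    Real.one_rpow]
  rfl

lemma powNorm_smul (p c : ℝ) (z : ℝ × ℝ) : powNorm p (c • z) = |c| ^ p * powNorm p z := by
  simp only [powNorm, Prod.smul_fst, Prod.smul_snd, smul_eq_mul, abs_mul]
  rw [Real.mul_rpow (abs_nonneg _) (abs_nonneg _), Real.mul_rpow (abs_nonneg _) (abs_nonneg _)]
  ring

lemma continuous_powNorm {p : ℝ} (hp : 1 < p) : Continuous (powNorm p) := by
  unfold powNorm
  exact (continuous_fst.abs.rpow_const fun _ => Or.inr (by linarith)).add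
    (continuous_snd.abs.rpow_const fun _ => Or.inr (by linarith))

lemma powNorm_pos {p : ℝ} {z : ℝ × ℝ} (hz : z ≠ 0) : 0 < powNorm p z := by
  unfold powNorm
  by_cases h : z.1 = 0
  · have : z.2 ≠ 0 := fun h2 => hz (Prod.ext h h2)
    positivity
  · positivity

lemma isCompact_powNorm_sphere {p : ℝ} (hp : 1 < p) : IsCompact {z : ℝ × ℝ | powNorm p z = 1} := by
  refine IsCompact.of_isClosed_subset (isCompact_closedBall (0 : ℝ × ℝ) 1)
    (isClosed_eq (continuous_powNorm hp) continuous_const) ?_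
  intro z hz
  have hz : |z.1| ^ p + |z.2| ^ p = 1 := hz
  have h1 : 0 ≤ |z.1| ^ p := by positivity
  have h2 : 0 ≤ |z.2| ^ p := by positivity
  have key : ∀ s : ℝ, |s| ^ p ≤ 1 → |s| ≤ 1 := by
    intro s hs
    by_contra hc
    have := Real.one_lt_rpow (not_le.1 hc) (by linarith : 0 < p)
    linarith
  rw [mem_closedBall_zero_iff, Prod.norm_def]
  exact max_le (key _ (by linarith)) (key _ (by linarith))

lemma app_smul (A : Matrix (Fin 2) (Fin 2) ℝ) (c : ℝ) (z : ℝ × ℝ) :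
    app A (c • z) = c • app A z := by
  ext <;> simp [app] <;> ring

lemma app_add (A : Matrix (Fin 2) (Fin 2) ℝ) (z w : ℝ × ℝ) :
    app A (z + w) = app A z + app A w := by
  ext <;> simp [app] <;> ring

lemma continuous_app (A : Matrix (Fin 2) (Fin 2) ℝ) : Continuous (app A) := by
  unfold app; fun_prop

lemma powNorm_e1 {p : ℝ} (hp : 1 < p) : powNorm p (1, 0) = 1 := by
  have : (0 : ℝ) ^ p = 0 := Real.zero_rpow (by linarith)
  simp [powNorm, this]

lemma isCompact_values {p : ℝ} (hp : 1 < p) (A : Matrix (Fin 2) (Fin 2) ℝ) :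
    IsCompact {c : ℝ | ∃ z : ℝ × ℝ, pnorm p z = 1 ∧ c = pnorm p (app A z)} := by
  have hc : Continuous fun z => pnorm p (app A z) :=
    ((continuous_powNorm hp).comp (continuous_app A)).rpow_const
      fun _ => Or.inr (by positivity)
  convert (isCompact_powNorm_sphere hp).image hc using 1
  ext c
  simp only [Set.mem_ofPred_eq, Set.mem_image, pnorm_eq_one_iff hp]
  exact ⟨fun ⟨z, h, e⟩ => ⟨z, h, e.symm⟩, fun ⟨z, h, e⟩ => ⟨z, h, e.symm⟩⟩

lemma mem_unitBall_iff {p : ℝ} (hp : 1 < p) (A : Matrix (Fin 2) (Fin 2) ℝ) :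
    A ∈ unitBall p p ↔ ∀ z, powNorm p (app A z) ≤ powNorm p z := by
  have hne : {c : ℝ | ∃ z : ℝ × ℝ, pnorm p z = 1 ∧ c = pnorm p (app A z)}.Nonempty :=
    ⟨_, (1, 0), (pnorm_eq_one_iff hp _).2 (powNorm_e1 hp), rfl⟩
  have h1 : A ∈ unitBall p p ↔ ∀ z, powNorm p z = 1 → powNorm p (app A z) ≤ 1 := by
    simp only [unitBall, opNorm, Set.mem_ofPred_eq]
    rw [csSup_le_iff (isCompact_values hp A).bddAbove hne]
    constructor
    · intro h z hz
      exact (pnorm_le_one_iff hp _).1 (h _ ⟨z, (pnorm_eq_one_iff hp z).2 hz, rfl⟩)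
    · rintro h _ ⟨z, hz, rfl⟩
      exact (pnorm_le_one_iff hp _).2 (h z ((pnorm_eq_one_iff hp z).1 hz))
  rw [h1]
  constructor
  · intro h z
    by_cases hz : z = 0
    · subst hz; exact (congrArg (powNorm p) (by simp [app])).le
    · have hpos := powNorm_pos (p := p) hz
      -- normalize `z` by the factor `‖z‖⁻¹`
      have hc : |powNorm p z ^ (-(1 / p))| ^ p = (powNorm p z)⁻¹ := by
        rw [abs_of_pos (by positivity), ← Real.rpow_mul hpos.le]
        rw [show -(1 / p) * p = -1 by field_simp, Real.rpow_neg_one]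
      have := h (powNorm p z ^ (-(1 / p)) • z) (by
        rw [powNorm_smul, hc]; field_simp)
      rw [app_smul, powNorm_smul, hc, inv_mul_le_iff₀ hpos, mul_one] at this
      exact this
  · intro h z hz
    exact (h z).trans hz.le

lemma exists_attain {p : ℝ} (hp : 1 < p) {T : Matrix (Fin 2) (Fin 2) ℝ} (hT : opNorm p p T = 1) :
    ∃ x, powNorm p x = 1 ∧ powNorm p (app T x) = 1 := by
  have hne : {c : ℝ | ∃ z : ℝ × ℝ, pnorm p z = 1 ∧ c = pnorm p (app T z)}.Nonempty :=
    ⟨_, (1, 0), (pnorm_eq_one_iff hp _).2 (powNorm_e1 hp), rfl⟩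
  obtain ⟨x, hx, h⟩ := (isCompact_values hp T).sSup_mem hne
  have h : opNorm p p T = _ := h
  exact ⟨x, (pnorm_eq_one_iff hp x).1 hx, (pnorm_eq_one_iff hp _).1 (h.symm.trans hT)⟩

lemma linearIndependent_iff_det (z w : ℝ × ℝ) :
    LinearIndependent ℝ ![z, w] ↔ z.1 * w.2 - z.2 * w.1 ≠ 0 := by
  rw [LinearIndependent.pair_iff]
  constructor
  · intro h hd
    have h1 := h w.2 (-z.2) (by
      ext
      · simp; linarith
      · simp; ring)
    have h2 := h w.1 (-z.1) (by
      ext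
      · simp; ring
      · simp; linarith)
    have h3 := h 1 0 (by
      ext
      · simp; linarith [h2.2]
      · simp; linarith [h1.2])
    exact one_ne_zero h3.1
  · intro hd s t hst
    have e1 : s * z.1 + t * w.1 = 0 := by simpa using congrArg Prod.fst hst
    have e2 : s * z.2 + t * w.2 = 0 := by simpa using congrArg Prod.snd hst
    constructor
    · exact (mul_eq_zero.1 (show s * (z.1 * w.2 - z.2 * w.1) = 0 by
        linear_combination w.2 * e1 - w.1 * e2)).resolve_right hd
    · exact (mul_eq_zero.1 (show t * (z.1 * w.2 - z.2 * w.1) = 0 by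
        linear_combination z.1 * e2 - z.2 * e1)).resolve_right hd

lemma coords {x w : ℝ × ℝ} (hd : x.1 * w.2 - x.2 * w.1 ≠ 0) (z : ℝ × ℝ) :
    z = ((z.1 * w.2 - z.2 * w.1) / (x.1 * w.2 - x.2 * w.1)) • x
      + ((x.1 * z.2 - x.2 * z.1) / (x.1 * w.2 - x.2 * w.1)) • w := by
  ext
  · simp only [Prod.fst_add, Prod.smul_fst, smul_eq_mul]
    rw [div_mul_eq_mul_div, div_mul_eq_mul_div, ← add_div, eq_div_iff hd]
    ring
  · simp only [Prod.snd_add, Prod.smul_snd, smul_eq_mul]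
    rw [div_mul_eq_mul_div, div_mul_eq_mul_div, ← add_div, eq_div_iff hd]
    ring

lemma ext_of_basis {x w : ℝ × ℝ} (hd : x.1 * w.2 - x.2 * w.1 ≠ 0)
    {A B : Matrix (Fin 2) (Fin 2) ℝ} (hx : app A x = app B x) (hw : app A w = app B w) : A = B := by
  have h : ∀ z, app A z = app B z := by
    intro z
    rw [coords hd z, app_add, app_add, app_smul, app_smul, app_smul, app_smul, hx, hw]
  have h1 := h (1, 0)
  have h2 := h (0, 1)
  simp only [app, mul_one, mul_zero, add_zero, zero_add, Prod.mk.injEq] at h1 h2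
  ext i j
  fin_cases i <;> fin_cases j
  exacts [h1.1, h2.1, h1.2, h2.2]

/-! ### Strict convexity -/

lemma abs_rpow_strict {p : ℝ} (hp : 1 < p) {a b α β : ℝ} (hab : a ≠ b) (hα : 0 < α) (hβ : 0 < β)
    (h1 : α + β = 1) : |α * a + β * b| ^ p < α * |a| ^ p + β * |b| ^ p := by
  by_cases h : |a| = |b|
  · have hb : b = -a := by
      rcases abs_eq_abs.1 h with h | h
      · exact absurd h hab
      · linarith
    subst hb
    have ha : 0 < |a| := by
      apply abs_pos.2
      rintro rfl
      simp at hab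
    have h2 : |α * a + β * -a| < |a| := by
      rw [show α * a + β * -a = (α - β) * a by ring, abs_mul]
      have : |α - β| < 1 := abs_lt.2 ⟨by linarith, by linarith⟩
      nlinarith
    have h3 := Real.rpow_lt_rpow (abs_nonneg _) h2 (by linarith : 0 < p)
    rw [abs_neg, ← add_mul, h1, one_mul]
    exact h3
  · have h2 : |α * a + β * b| ≤ α * |a| + β * |b| := by
      refine (abs_add_le _ _).trans ?_
      rw [abs_mul, abs_mul, abs_of_pos hα, abs_of_pos hβ]
    have h3 := Real.rpow_le_rpow (abs_nonneg _) h2 (by linarith : 0 ≤ p)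
    have h4 := (strictConvexOn_rpow hp).2 (Set.mem_Ici.2 (abs_nonneg a))
      (Set.mem_Ici.2 (abs_nonneg b)) h hα hβ h1
    simp only [smul_eq_mul] at h4
    linarith

lemma abs_rpow_convex {p : ℝ} (hp : 1 < p) {a b α β : ℝ} (hα : 0 < α) (hβ : 0 < β)
    (h1 : α + β = 1) : |α * a + β * b| ^ p ≤ α * |a| ^ p + β * |b| ^ p := by
  by_cases h : a = b
  · subst h; rw [← add_mul, ← add_mul, h1]; simp
  · exact (abs_rpow_strict hp h hα hβ h1).le

/-- By strict convexity, at a norm-attaining vector of `T` the two ends of a segment of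
contractions through `T` take the same value as `T`. -/
lemma app_eq_of_openSegment {p : ℝ} (hp : 1 < p) {T A B : Matrix (Fin 2) (Fin 2) ℝ}
    (hA : A ∈ unitBall p p) (hB : B ∈ unitBall p p) (hT : T ∈ openSegment ℝ A B) {z : ℝ × ℝ}
    (hz : powNorm p (app T z) = powNorm p z) : app A z = app T z := by
  obtain ⟨α, β, hα, hβ, h1, rfl⟩ := hT
  have hA := (mem_unitBall_iff hp A).1 hA z
  have hB := (mem_unitBall_iff hp B).1 hB z
  have e1 : (app (α • A + β • B) z).1 = α * (app A z).1 + β * (app B z).1 := by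
    simp [app]; ring
  have e2 : (app (α • A + β • B) z).2 = α * (app A z).2 + β * (app B z).2 := by
    simp [app]; ring
  have hAB : app A z = app B z := by
    unfold powNorm at *
    rw [e1, e2] at hz
    have m : α * (|(app A z).1| ^ p + |(app A z).2| ^ p)
        + β * (|(app B z).1| ^ p + |(app B z).2| ^ p) ≤ |z.1| ^ p + |z.2| ^ p := by
      have := mul_le_mul_of_nonneg_left hA hα.le
      have := mul_le_mul_of_nonneg_left hB hβ.le
      have e : |z.1| ^ p + |z.2| ^ p =
        α * (|z.1| ^ p + |z.2| ^ p) + β * (|z.1| ^ p + |z.2| ^ p) := by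
        rw [← add_mul, h1, one_mul]
      linarith
    have c1 := abs_rpow_convex hp (a := (app A z).1) (b := (app B z).1) hα hβ h1
    have c2 := abs_rpow_convex hp (a := (app A z).2) (b := (app B z).2) hα hβ h1
    ext
    · by_contra hne
      have := abs_rpow_strict hp hne hα hβ h1
      linarith
    · by_contra hne
      have := abs_rpow_strict hp hne hα hβ h1
      linarith
  ext
  · rw [e1, ← hAB, ← add_mul, h1, one_mul]
  · rw [e2, ← hAB, ← add_mul, h1, one_mul]

/-! ### Adapted frames -/

/-- `w` spans the tangent direction of the unit sphere at the unit vector `x`, and `φ` is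
`t ↦ ‖x + t w‖ᵖ`. The normalization of `x` is not a field; tangency is encoded by `ge` and `der`. -/
structure Frame (p : ℝ) (x w : ℝ × ℝ) (φ : ℝ → ℝ) : Prop where
  det : x.1 * w.2 - x.2 * w.1 ≠ 0
  eq : ∀ t, powNorm p (x + t • w) = φ t
  ge : ∀ t, 1 ≤ φ t
  der : HasDerivAt φ 0 0

lemma Frame.zero {p : ℝ} {x w : ℝ × ℝ} {φ : ℝ → ℝ} (h : Frame p x w φ) : φ 0 = powNorm p x := by
  rw [← h.eq 0]; simp

lemma Frame.eq' {p : ℝ} {x w : ℝ × ℝ} {φ : ℝ → ℝ} (h : Frame p x w φ) {α : ℝ} (hα : α ≠ 0)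
    (β : ℝ) : powNorm p (α • x + β • w) = |α| ^ p * φ (β / α) := by
  rw [← h.eq, ← powNorm_smul, smul_add, smul_smul, mul_div_cancel₀ _ hα]

/-- The tangent direction at a unit vector with nonzero coordinates. -/
def tang (p : ℝ) (x : ℝ × ℝ) : ℝ × ℝ := (-(|x.2| ^ p * x.1), |x.1| ^ p * x.2)

lemma frame_tang {p : ℝ} (hp : 1 < p) {x : ℝ × ℝ} (hx : powNorm p x = 1) (h : x.1 * x.2 ≠ 0) :
    0 < |x.1| ^ p ∧ |x.1| ^ p < 1 ∧ Frame p x (tang p x) (gprof p (|x.1| ^ p)) := by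
  have h1 : x.1 ≠ 0 := left_ne_zero_of_mul h
  have h2 : x.2 ≠ 0 := right_ne_zero_of_mul h
  have p1 : 0 < |x.1| ^ p := by positivity
  have p2 : 0 < |x.2| ^ p := by positivity
  have hx : |x.1| ^ p + |x.2| ^ p = 1 := hx
  have e : |x.2| ^ p = 1 - |x.1| ^ p := by linarith
  refine ⟨p1, by linarith, ?_, ?_, one_le_gprof hp p1 (by linarith), hasDerivAt_gprof⟩
  · have : x.1 * (tang p x).2 - x.2 * (tang p x).1
        = x.1 * x.2 * (|x.1| ^ p + |x.2| ^ p) := by simp only [tang]; ring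
    rw [this, hx, mul_one]; exact h
  · intro t
    simp only [powNorm, gprof, tang, Prod.fst_add, Prod.snd_add, Prod.smul_fst, Prod.smul_snd,
      smul_eq_mul]
    rw [show x.1 + t * -(|x.2| ^ p * x.1) = x.1 * (1 - |x.2| ^ p * t) by ring,
      show x.2 + t * (|x.1| ^ p * x.2) = x.2 * (1 + |x.1| ^ p * t) by ring, abs_mul, abs_mul,
      Real.mul_rpow (abs_nonneg _) (abs_nonneg _), Real.mul_rpow (abs_nonneg _) (abs_nonneg _), e]

lemma frame_rot {p : ℝ} (hp : 1 < p) {x : ℝ × ℝ} (hx : powNorm p x = 1) (h : x.1 * x.2 = 0) :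
    Frame p x (rot x) (aprof p) := by
  refine ⟨?_, ?_, fun t => ?_, hasDerivAt_aprof hp⟩
  · intro hd
    simp only [rot] at hd
    have h1 : x.1 = 0 := by nlinarith [sq_nonneg x.1, sq_nonneg x.2]
    have h2 : x.2 = 0 := by nlinarith [sq_nonneg x.1, sq_nonneg x.2]
    have : (0 : ℝ) ^ p = 0 := Real.zero_rpow (by linarith)
    simp [powNorm, h1, h2, this] at hx
  · intro t
    have h0 : (0 : ℝ) ^ p = 0 := Real.zero_rpow (by linarith)
    unfold powNorm at hx
    rcases mul_eq_zero.1 h with h | h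
    · rw [h, abs_zero, h0, zero_add] at hx
      simp [powNorm, rot, aprof, h, abs_mul, Real.mul_rpow (abs_nonneg _) (abs_nonneg _), hx]
      ring
    · rw [h, abs_zero, h0, add_zero] at hx
      simp [powNorm, rot, aprof, h, abs_mul, Real.mul_rpow (abs_nonneg _) (abs_nonneg _), hx]
  · have : 0 ≤ |t| ^ p := by positivity
    unfold aprof; linarith

/-- A contraction carrying the unit vector `x` to the unit vector `y` carries the tangent
direction at `x` to that at `y`, because the unit sphere is smooth. -/
lemma image_tangent {p : ℝ} (hp : 1 < p) {x w y u : ℝ × ℝ} {φ ψ : ℝ → ℝ} (hx : Frame p x w φ)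
    (hy : Frame p y u ψ) (hx1 : powNorm p x = 1) {A : Matrix (Fin 2) (Fin 2) ℝ}
    (hA : A ∈ unitBall p p) (hxy : app A x = y) :
    ∃ σ : ℝ, app A w = σ • u ∧ ∀ t, ψ (σ * t) ≤ φ t := by
  have hA := (mem_unitBall_iff hp A).1 hA
  have hle : ∀ t, powNorm p (y + t • app A w) ≤ φ t := by
    intro t
    have := hA (x + t • w)
    rwa [app_add, app_smul, hxy, hx.eq] at this
  obtain ⟨β, σ, hv⟩ : ∃ β σ : ℝ, app A w = β • y + σ • u := ⟨_, _, coords hy.det _⟩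
  -- a component `β` along `y` would give `φ` a linear lower bound of slope `p β`, while `φ` has derivative `0` at `0`
  have hmin : ∀ t, 1 + p * (t * β) ≤ φ t := by
    intro t
    by_cases h0 : 1 + t * β = 0
    · have := hx.ge t
      nlinarith
    · have h1 := hle t
      rw [hv, show y + t • (β • y + σ • u) = (1 + t * β) • y + (t * σ) • u by module,
        hy.eq' h0] at h1
      have h2 := one_add_mul_le_abs_rpow hp (t * β)
      have h3 := hy.ge (t * σ / (1 + t * β))
      have h4 : 0 ≤ |1 + t * β| ^ p := by positivity
      nlinarith
  have hd : HasDerivAt (fun t => φ t - (p * β) * t) (0 - (p * β) * 1) 0 :=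
    hx.der.sub ((hasDerivAt_id (0 : ℝ)).const_mul (p * β))
  have hm : IsLocalMin (fun t => φ t - (p * β) * t) 0 := by
    refine Eventually.of_forall fun t => ?_
    have := hmin t
    simp only [hx.zero, hx1]
    linarith
  have hz := hm.hasDerivAt_eq_zero hd
  have hβ : β = 0 := by
    have : p * β = 0 := by linarith
    exact (mul_eq_zero.1 this).resolve_left (by linarith)
  subst hβ
  have hv : app A w = σ • u := by rw [hv]; simp
  refine ⟨σ, hv, fun t => ?_⟩
  have := hle t
  rwa [hv, smul_smul, hy.eq, mul_comm] at this

/-- If `T` attains its norm only along `x`, and near `x` the norm inequality survives a small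
change of the coefficient `σ`, then `T` can be moved in both directions inside the unit ball:
the inequality away from `x` is stable by compactness. -/
lemma not_extreme {p : ℝ} (hp : 1 < p) {x w y u : ℝ × ℝ} {φ ψ : ℝ → ℝ} (hx : Frame p x w φ)
    (hy : Frame p y u ψ) {T : Matrix (Fin 2) (Fin 2) ℝ} {σ : ℝ} (hTx : app T x = y)
    (hTw : app T w = σ • u)
    (hstr : ∀ z : ℝ × ℝ, x.1 * z.2 - x.2 * z.1 ≠ 0 → powNorm p (app T z) < powNorm p z)
    (hloc : ∀ᶠ q : ℝ × ℝ in 𝓝 (σ, 0), ψ (q.1 * q.2) ≤ φ q.2) :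
    T ∉ Set.extremePoints ℝ (unitBall p p) := by
  intro hext
  set D := x.1 * w.2 - x.2 * w.1 with hD
  have hD0 : D ≠ 0 := hx.det
  -- the direction of perturbation: `C x = 0`, `C w = u`
  set C : Matrix (Fin 2) (Fin 2) ℝ :=
    !![-(x.2 * u.1) / D, x.1 * u.1 / D; -(x.2 * u.2) / D, x.1 * u.2 / D] with hC
  have hCz : ∀ z, app C z = ((x.1 * z.2 - x.2 * z.1) / D) • u := by
    intro z
    ext <;> simp [app, hC] <;> ring
  have hTC : ∀ (s : ℝ) z, app (T + s • C) z = app T z + s • app C z := by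
    intro s z
    ext <;> simp [app] <;> ring
  have hTz : ∀ z, app T z = ((z.1 * w.2 - z.2 * w.1) / D) • y
      + (((x.1 * z.2 - x.2 * z.1) / D) * σ) • u := by
    intro z
    conv_lhs => rw [coords hx.det z]
    rw [app_add, app_smul, app_smul, hTx, hTw, smul_smul]
  have hev : ∀ᶠ s : ℝ in 𝓝 0, ∀ z ∈ {z : ℝ × ℝ | powNorm p z = 1},
      powNorm p (app (T + s • C) z) ≤ powNorm p z := by
    apply (isCompact_powNorm_sphere hp).eventually_forall_of_forall_eventually
    intro z₀ hz₀
    -- on the line of `x` use the local inequality, elsewhere the strict one and continuity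
    by_cases h0 : x.1 * z₀.2 - x.2 * z₀.1 = 0
    · have hα0 : (z₀.1 * w.2 - z₀.2 * w.1) / D ≠ 0 := by
        intro hα
        have := coords hx.det z₀
        rw [← hD, hα, h0, zero_div, zero_smul, zero_smul, add_zero] at this
        have hz₀ : powNorm p z₀ = 1 := hz₀
        have h00 : (0 : ℝ) ^ p = 0 := Real.zero_rpow (by linarith)
        rw [this] at hz₀
        simp [powNorm, h00] at hz₀
      have cα : ContinuousAt (fun q : ℝ × (ℝ × ℝ) => (q.2.1 * w.2 - q.2.2 * w.1) / D) (0, z₀) := by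
        fun_prop
      have cβ : ContinuousAt (fun q : ℝ × (ℝ × ℝ) => (x.1 * q.2.2 - x.2 * q.2.1) / D) (0, z₀) := by
        fun_prop
      have ct : Tendsto (fun q : ℝ × (ℝ × ℝ) => (σ + q.1,
          ((x.1 * q.2.2 - x.2 * q.2.1) / D) / ((q.2.1 * w.2 - q.2.2 * w.1) / D)))
          (𝓝 (0, z₀)) (𝓝 (σ, 0)) := by
        have h1 : ContinuousAt (fun q : ℝ × (ℝ × ℝ) => σ + q.1) (0, z₀) := by fun_prop
        have h2 := h1.prodMk (cβ.div cα hα0)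
        simpa [ContinuousAt, h0] using h2
      filter_upwards [cα.eventually_ne hα0, ct.eventually hloc] with q hq1 hq2
      obtain ⟨s, z⟩ := q
      simp only at hq1 hq2
      rw [hTC, hTz, hCz, add_assoc, smul_smul, ← add_smul, hy.eq' hq1]
      conv_rhs => rw [coords hx.det z, ← hD, hx.eq' hq1]
      refine mul_le_mul_of_nonneg_left ?_ (by positivity)
      refine le_of_eq_of_le (congrArg ψ ?_) hq2
      ring
    · have hlt := hstr z₀ h0
      have c1 : Continuous fun q : ℝ × (ℝ × ℝ) => powNorm p (app (T + q.1 • C) q.2) := by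
        refine (continuous_powNorm hp).comp ?_
        simp only [hTC]
        exact ((continuous_app T).comp continuous_snd).add
          (continuous_fst.smul ((continuous_app C).comp continuous_snd))
      have c2 : Continuous fun q : ℝ × (ℝ × ℝ) => powNorm p q.2 :=
        (continuous_powNorm hp).comp continuous_snd
      have := c1.continuousAt.eventually_lt c2.continuousAt (x₀ := ((0 : ℝ), z₀))
        (by simpa using hlt)
      filter_upwards [this] with q hq using hq.le
  have hball : ∀ s : ℝ, (∀ z ∈ {z : ℝ × ℝ | powNorm p z = 1},
      powNorm p (app (T + s • C) z) ≤ powNorm p z) → T + s • C ∈ unitBall p p := by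
    intro s hs
    change sSup {c : ℝ | ∃ z : ℝ × ℝ, pnorm p z = 1 ∧ c = pnorm p (app (T + s • C) z)} ≤ 1
    refine csSup_le ⟨_, (1, 0), (pnorm_eq_one_iff hp _).2 (powNorm_e1 hp), rfl⟩ ?_
    rintro _ ⟨z, hz, rfl⟩
    have hz := (pnorm_eq_one_iff hp z).1 hz
    exact (pnorm_le_one_iff hp _).2 ((hs z hz).trans hz.le)
  obtain ⟨ε, hε, H⟩ := Metric.eventually_nhds_iff.1 hev
  have b1 := hball (ε / 2) (H (by simp [abs_of_pos hε]; linarith))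
  have b2 := hball (-(ε / 2)) (H (by simp [abs_of_pos hε]; linarith))
  have hseg : T ∈ openSegment ℝ (T + (ε / 2) • C) (T + (-(ε / 2)) • C) :=
    ⟨1 / 2, 1 / 2, by norm_num, by norm_num, by norm_num, by module⟩
  have hTT := (mem_extremePoints_iff_left.1 hext).2 _ b1 _ b2 hseg
  have hu : u = 0 := by
    have h1 := hTC (ε / 2) w
    rw [hTT, hCz, ← hD, div_self hD0, one_smul] at h1
    have h2 : (ε / 2) • u = 0 := by simpa using h1
    exact (smul_eq_zero.1 h2).resolve_left (by positivity)
  exact hy.det (by simp [hu])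

/-! ### Rank-one operators -/

lemma eq_zero_or_of_unit {p : ℝ} (hp : 1 < p) {x : ℝ × ℝ} (hx : powNorm p x = 1)
    (h : x.1 * x.2 = 0) : (x.2 = 0 ∧ |x.1| = 1) ∨ (x.1 = 0 ∧ |x.2| = 1) := by
  have h0 : (0 : ℝ) ^ p = 0 := Real.zero_rpow (by linarith)
  have key : ∀ s : ℝ, |s| ^ p = 1 → |s| = 1 := by
    intro s hs
    exact (Real.rpow_left_inj (abs_nonneg s) zero_le_one (by linarith : p ≠ 0)).1
      (hs.trans (Real.one_rpow p).symm)
  unfold powNorm at hx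
  rcases mul_eq_zero.1 h with h | h
  · exact Or.inr ⟨h, key _ (by simpa [h, h0] using hx)⟩
  · exact Or.inl ⟨h, key _ (by simpa [h, h0] using hx)⟩

/-- An operator carrying `x = ± eᵢ` to `y` and killing the tangent direction at `x` is
`eᵢ ⊗ (± y)`. -/
lemma tensor_of_axis {p : ℝ} (hp : 1 < p) {x y : ℝ × ℝ} {T : Matrix (Fin 2) (Fin 2) ℝ}
    (hx : powNorm p x = 1) (hx0 : x.1 * x.2 = 0) (hy : powNorm p y = 1) (hy0 : y.1 * y.2 ≠ 0)
    (hTx : app T x = y) (hTw : app T (rot x) = 0) :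
    ∃ y : ℝ × ℝ, pnorm p y = 1 ∧ y.1 * y.2 ≠ 0 ∧
      (T = tensor ((1 : ℝ), (0 : ℝ)) y ∨ T = tensor ((0 : ℝ), (1 : ℝ)) y) := by
  have e1 := congrArg Prod.fst hTw
  have e2 := congrArg Prod.snd hTw
  rcases eq_zero_or_of_unit hp hx hx0 with ⟨h2, h1⟩ | ⟨h1, h2⟩
  · have hne : x.1 ≠ 0 := abs_pos.1 (by rw [h1]; norm_num)
    have hsq : x.1 * x.1 = 1 := by rw [← abs_mul_abs_self, h1, one_mul]
    have hy' : app T (1, 0) = x.1 • y := by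
      rw [← hTx, ← app_smul]
      congr 1
      ext <;> simp [h2, hsq]
    refine ⟨x.1 • y, ?_, ?_, Or.inl ?_⟩
    · rw [pnorm_eq_one_iff hp, powNorm_smul, h1, hy]; simp
    · simp only [Prod.smul_fst, Prod.smul_snd, smul_eq_mul]
      rwa [mul_mul_mul_comm, hsq, one_mul]
    · rw [← hy']
      simp [app, rot, h2, hne] at e1 e2
      ext i j
      fin_cases i <;> fin_cases j <;> simp [tensor, app, e1, e2]
  · have hne : x.2 ≠ 0 := abs_pos.1 (by rw [h2]; norm_num)
    have hsq : x.2 * x.2 = 1 := by rw [← abs_mul_abs_self, h2, one_mul]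
    have hy' : app T (0, 1) = x.2 • y := by
      rw [← hTx, ← app_smul]
      congr 1
      ext <;> simp [h1, hsq]
    refine ⟨x.2 • y, ?_, ?_, Or.inr ?_⟩
    · rw [pnorm_eq_one_iff hp, powNorm_smul, h2, hy]; simp
    · simp only [Prod.smul_fst, Prod.smul_snd, smul_eq_mul]
      rwa [mul_mul_mul_comm, hsq, one_mul]
    · rw [← hy']
      simp [app, rot, h1, hne] at e1 e2
      ext i j
      fin_cases i <;> fin_cases j <;> simp [tensor, app, e1, e2]

lemma mul_sign_rpow {p : ℝ} (s : ℝ) (hs : s ≠ 0) :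
    s * (Real.sign s * |s| ^ (p - 1)) = |s| ^ p := by
  have h : |s| * |s| ^ (p - 1) = |s| ^ p := by
    nth_rewrite 1 [← Real.rpow_one |s|]
    rw [← Real.rpow_add (abs_pos.2 hs)]
    congr 1; ring
  rw [← h]
  rcases lt_or_gt_of_ne hs with h1 | h1
  · rw [Real.sign_of_neg h1, abs_of_neg h1]; ring
  · rw [Real.sign_of_pos h1, abs_of_pos h1]; ring

lemma spow_dot {p : ℝ} {x : ℝ × ℝ} (hx : powNorm p x = 1) (hx0 : x.1 * x.2 ≠ 0) :
    (spow x (p - 1)).1 * x.1 + (spow x (p - 1)).2 * x.2 = 1 ∧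
      (spow x (p - 1)).1 * (tang p x).1 + (spow x (p - 1)).2 * (tang p x).2 = 0 := by
  have h1 := mul_sign_rpow (p := p) x.1 (left_ne_zero_of_mul hx0)
  have h2 := mul_sign_rpow (p := p) x.2 (right_ne_zero_of_mul hx0)
  have hx : |x.1| ^ p + |x.2| ^ p = 1 := hx
  simp only [spow, tang]
  constructor
  · linear_combination h1 + h2 + hx
  · linear_combination |x.1| ^ p * h2 - |x.2| ^ p * h1

/-- A row `r` with `r · x = 1` which annihilates the tangent direction at `x` is `x^{p-1}`. -/
lemma row_eq_spow {p : ℝ} {x : ℝ × ℝ} (hx : powNorm p x = 1) (hx0 : x.1 * x.2 ≠ 0) {r₁ r₂ : ℝ}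
    (h1 : r₁ * x.1 + r₂ * x.2 = 1) (h2 : r₁ * (tang p x).1 + r₂ * (tang p x).2 = 0) :
    r₁ = (spow x (p - 1)).1 ∧ r₂ = (spow x (p - 1)).2 := by
  have hx1 : x.1 ≠ 0 := left_ne_zero_of_mul hx0
  have hx2 : x.2 ≠ 0 := right_ne_zero_of_mul hx0
  have hx : |x.1| ^ p + |x.2| ^ p = 1 := hx
  simp only [tang] at h2
  constructor
  · apply mul_left_cancel₀ hx1
    simp only [spow]
    rw [mul_sign_rpow _ hx1]
    linear_combination |x.1| ^ p * h1 - h2 - r₁ * x.1 * hx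
  · apply mul_left_cancel₀ hx2
    simp only [spow]
    rw [mul_sign_rpow _ hx2]
    linear_combination |x.2| ^ p * h1 + h2 - r₂ * x.2 * hx

lemma row_eq_zero {p : ℝ} {x : ℝ × ℝ} (hx : powNorm p x = 1) (hx0 : x.1 * x.2 ≠ 0) {r₁ r₂ : ℝ}
    (h1 : r₁ * x.1 + r₂ * x.2 = 0) (h2 : r₁ * (tang p x).1 + r₂ * (tang p x).2 = 0) :
    r₁ = 0 ∧ r₂ = 0 := by
  have hx1 : x.1 ≠ 0 := left_ne_zero_of_mul hx0
  have hx2 : x.2 ≠ 0 := right_ne_zero_of_mul hx0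
  have hx : |x.1| ^ p + |x.2| ^ p = 1 := hx
  simp only [tang] at h2
  constructor
  · apply mul_left_cancel₀ hx1
    linear_combination |x.1| ^ p * h1 - h2 - r₁ * x.1 * hx
  · apply mul_left_cancel₀ hx2
    linear_combination |x.2| ^ p * h1 + h2 - r₂ * x.2 * hx

lemma tang_smul {p ε : ℝ} (hε : |ε| = 1) (x : ℝ × ℝ) : tang p (ε • x) = ε • tang p x := by
  ext <;> simp [tang, abs_mul, hε] <;> ring

/-- An operator carrying `x` to `y = ± eⱼ` and killing the tangent direction at `x` is
`(± x)^{p-1} ⊗ eⱼ`. -/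
lemma tensor_of_generic {p : ℝ} (hp : 1 < p) {x y : ℝ × ℝ} {T : Matrix (Fin 2) (Fin 2) ℝ}
    (hx : powNorm p x = 1) (hx0 : x.1 * x.2 ≠ 0) (hy : powNorm p y = 1) (hy0 : y.1 * y.2 = 0)
    (hTx : app T x = y) (hTw : app T (tang p x) = 0) :
    ∃ x : ℝ × ℝ, pnorm p x = 1 ∧ x.1 * x.2 ≠ 0 ∧
      (T = tensor (spow x (p - 1)) ((1 : ℝ), (0 : ℝ)) ∨
       T = tensor (spow x (p - 1)) ((0 : ℝ), (1 : ℝ))) := by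
  -- replace `x` by `ε x`, so that its image is a basis vector
  have flip : ∀ ε : ℝ, |ε| = 1 → powNorm p (ε • x) = 1 ∧ (ε • x).1 * (ε • x).2 ≠ 0 ∧
      app T (ε • x) = ε • y ∧ app T (tang p (ε • x)) = 0 := by
    intro ε hε
    have hsq : ε * ε = 1 := by rw [← abs_mul_abs_self, hε, one_mul]
    refine ⟨?_, ?_, ?_, ?_⟩
    · rw [powNorm_smul, hε, hx]; simp
    · simp only [Prod.smul_fst, Prod.smul_snd, smul_eq_mul]
      rwa [mul_mul_mul_comm, hsq, one_mul]
    · rw [app_smul, hTx]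
    · rw [tang_smul hε, app_smul, hTw, smul_zero]
  rcases eq_zero_or_of_unit hp hy hy0 with ⟨h2, h1⟩ | ⟨h1, h2⟩
  · have hsq : y.1 * y.1 = 1 := by rw [← abs_mul_abs_self, h1, one_mul]
    obtain ⟨f1, f2, f3, f4⟩ := flip _ h1
    have g1 := congrArg Prod.fst f3
    have g2 := congrArg Prod.snd f3
    have g3 := congrArg Prod.fst f4
    have g4 := congrArg Prod.snd f4
    simp only [app, Prod.smul_fst y.1 y, Prod.smul_snd y.1 y, smul_eq_mul, hsq, h2, mul_zero,
      Prod.fst_zero, Prod.snd_zero] at g1 g2 g3 g4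
    obtain ⟨k1, k2⟩ := row_eq_spow f1 f2 g1 g3
    obtain ⟨k3, k4⟩ := row_eq_zero f1 f2 g2 g4
    refine ⟨y.1 • x, (pnorm_eq_one_iff hp _).2 f1, f2, Or.inl ?_⟩
    ext i j
    fin_cases i <;> fin_cases j <;> simp [tensor, k1, k2, k3, k4]
  · have hsq : y.2 * y.2 = 1 := by rw [← abs_mul_abs_self, h2, one_mul]
    obtain ⟨f1, f2, f3, f4⟩ := flip _ h2
    have g1 := congrArg Prod.fst f3
    have g2 := congrArg Prod.snd f3
    have g3 := congrArg Prod.fst f4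
    have g4 := congrArg Prod.snd f4
    simp only [app, Prod.smul_fst y.2 y, Prod.smul_snd y.2 y, smul_eq_mul, hsq, h1, mul_zero,
      Prod.fst_zero, Prod.snd_zero] at g1 g2 g3 g4
    obtain ⟨k1, k2⟩ := row_eq_zero f1 f2 g1 g3
    obtain ⟨k3, k4⟩ := row_eq_spow f1 f2 g2 g4
    refine ⟨y.2 • x, (pnorm_eq_one_iff hp _).2 f1, f2, Or.inr ?_⟩
    ext i j
    fin_cases i <;> fin_cases j <;> simp [tensor, k1, k2, k3, k4]

/-- An operator killing the tangent direction at `x` is extreme as soon as every contraction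
agreeing with it at `x` must kill that direction as well; `h` expresses the latter through the local
inequality. -/
lemma extreme_of_rank_one {p : ℝ} (hp : 1 < p) {x w y u : ℝ × ℝ} {φ ψ : ℝ → ℝ}
    {T : Matrix (Fin 2) (Fin 2) ℝ} (hTb : T ∈ unitBall p p) (hx : Frame p x w φ)
    (hy : Frame p y u ψ) (hx1 : powNorm p x = 1) (hy1 : powNorm p y = 1) (hTx : app T x = y)
    (hTw : app T w = 0) (h : ∀ σ : ℝ, (∀ t, ψ (σ * t) ≤ φ t) → σ = 0) :
    T ∈ Set.extremePoints ℝ (unitBall p p) := by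
  refine mem_extremePoints_iff_left.2 ⟨hTb, fun A hA B hB hseg => ?_⟩
  have hAx := app_eq_of_openSegment hp hA hB hseg (z := x) (by rw [hTx, hx1, hy1])
  obtain ⟨σ, hσ, hle⟩ := image_tangent hp hx hy hx1 hA (hAx.trans hTx)
  refine ext_of_basis hx.det hAx ?_
  rw [hσ, h σ hle, hTw, zero_smul]

/-! ### The characterization -/

/-- Extreme contractions from ℓ^p_2 to ℓ^p_2 for p ≠ 2. -/
theorem stmt_6 (p : ℝ) (hp : 1 < p) (hp2 : p ≠ 2) (T : Matrix (Fin 2) (Fin 2) ℝ)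
    (hT : opNorm p p T = 1) :
    T ∈ Set.extremePoints ℝ (unitBall p p) ↔
      ((∃ z w : ℝ × ℝ, LinearIndependent ℝ ![z, w] ∧
          pnorm p (app T z) = pnorm p z ∧ pnorm p (app T w) = pnorm p w) ∨
       (2 < p ∧ ∃ y : ℝ × ℝ, pnorm p y = 1 ∧ y.1 * y.2 ≠ 0 ∧
          (T = tensor ((1 : ℝ), (0 : ℝ)) y ∨ T = tensor ((0 : ℝ), (1 : ℝ)) y)) ∨
       (p < 2 ∧ ∃ x : ℝ × ℝ, pnorm p x = 1 ∧ x.1 * x.2 ≠ 0 ∧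
          (T = tensor (spow x (p - 1)) ((1 : ℝ), (0 : ℝ)) ∨
           T = tensor (spow x (p - 1)) ((0 : ℝ), (1 : ℝ))))) := by
  have hTb : T ∈ unitBall p p := hT.le
  have h00 : (0 : ℝ) ^ p = 0 := Real.zero_rpow (by linarith)
  constructor
  · intro hext
    refine or_iff_not_imp_left.2 fun hnot => ?_
    have hind : ∀ z w : ℝ × ℝ, z.1 * w.2 - z.2 * w.1 ≠ 0 → powNorm p (app T z) = powNorm p z →
        powNorm p (app T w) ≠ powNorm p w := fun z w hd hz hw =>
      hnot ⟨z, w, (linearIndependent_iff_det z w).2 hd, (pnorm_eq_iff hp _ _).2 hz,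
        (pnorm_eq_iff hp _ _).2 hw⟩
    obtain ⟨x, hx1, hy1⟩ := exists_attain hp hT
    obtain ⟨y, hTx⟩ : ∃ y, app T x = y := ⟨_, rfl⟩
    have hxatt : powNorm p (app T x) = powNorm p x := hy1.trans hx1.symm
    rw [hTx] at hy1
    have hstr : ∀ z : ℝ × ℝ, x.1 * z.2 - x.2 * z.1 ≠ 0 → powNorm p (app T z) < powNorm p z :=
      fun z hz => lt_of_le_of_ne ((mem_unitBall_iff hp T).1 hTb z) (hind x z hz hxatt)
    by_cases hx0 : x.1 * x.2 = 0 <;> by_cases hy0 : y.1 * y.2 = 0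
    · have fx := frame_rot hp hx1 hx0
      have fy := frame_rot hp hy1 hy0
      obtain ⟨σ, hσ, hle⟩ := image_tangent hp fx fy hx1 hTb hTx
      refine absurd hext (not_extreme hp fx fy hTx hσ hstr (aprof_comparison hp ?_))
      -- if `|σ| ≥ 1`, then `T` also attains its norm at `x + rot x`
      by_contra hge
      refine hind x (x + (1 : ℝ) • rot x) ?_ hxatt ?_
      · convert fx.det using 1
        simp; ring
      · refine le_antisymm ((mem_unitBall_iff hp T).1 hTb _) ?_
        rw [app_add, app_smul, hTx, hσ, fx.eq, one_smul, fy.eq]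
        have := Real.one_le_rpow (not_lt.1 hge) (by linarith : 0 ≤ p)
        simp only [aprof, abs_one, Real.one_rpow]
        linarith
    · have fx := frame_rot hp hx1 hx0
      obtain ⟨c0, c1, fy⟩ := frame_tang hp hy1 hy0
      obtain ⟨σ, hσ, hle⟩ := image_tangent hp fx fy hx1 hTb hTx
      rcases lt_or_gt_of_ne hp2 with h2 | h2
      · exact absurd hext (not_extreme hp fx fy hTx hσ hstr
          (gprof_le_aprof_comparison hp h2 c0 c1))
      · rw [eq_zero_of_gprof_le_aprof h2 c0 c1 hle, zero_smul] at hσ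
        exact Or.inl ⟨h2, tensor_of_axis hp hx1 hx0 hy1 hy0 hTx hσ⟩
    · obtain ⟨a0, a1, fx⟩ := frame_tang hp hx1 hx0
      have fy := frame_rot hp hy1 hy0
      obtain ⟨σ, hσ, hle⟩ := image_tangent hp fx fy hx1 hTb hTx
      rcases lt_or_gt_of_ne hp2 with h2 | h2
      · rw [eq_zero_of_aprof_le_gprof hp h2 a0 a1 hle, zero_smul] at hσ
        exact Or.inr ⟨h2, tensor_of_generic hp hx1 hx0 hy1 hy0 hTx hσ⟩
      · exact absurd hext (not_extreme hp fx fy hTx hσ hstr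
          (aprof_le_gprof_comparison h2 a0 a1))
    · obtain ⟨a0, a1, fx⟩ := frame_tang hp hx1 hx0
      obtain ⟨c0, c1, fy⟩ := frame_tang hp hy1 hy0
      obtain ⟨σ, hσ, hle⟩ := image_tangent hp fx fy hx1 hTb hTx
      refine absurd hext (not_extreme hp fx fy hTx hσ hstr (gprof_comparison hp ?_))
      -- otherwise the curves coincide, and `T` also attains its norm at `x + tang p x`
      by_contra hge
      have hrig := gprof_rigid hp hp2 a0 a1 hle (not_lt.1 hge)
      refine hind x (x + (1 : ℝ) • tang p x) ?_ hxatt ?_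
      · convert fx.det using 1
        simp; ring
      · rw [app_add, app_smul, hTx, hσ, fx.eq, one_smul, fy.eq, ← hrig 1, mul_one]
  · rintro (⟨z, w, hind, hz, hw⟩ | ⟨h2, y, hy, hy0, hT' | hT'⟩ | ⟨h2, x, hx, hx0, hT' | hT'⟩)
    · refine mem_extremePoints_iff_left.2 ⟨hTb, fun A hA B hB hseg => ?_⟩
      exact ext_of_basis ((linearIndependent_iff_det z w).1 hind)
        (app_eq_of_openSegment hp hA hB hseg ((pnorm_eq_iff hp _ _).1 hz))
        (app_eq_of_openSegment hp hA hB hseg ((pnorm_eq_iff hp _ _).1 hw))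
    · have hy1 := (pnorm_eq_one_iff hp y).1 hy
      obtain ⟨c0, c1, fy⟩ := frame_tang hp hy1 hy0
      have hx1 : powNorm p ((1 : ℝ), (0 : ℝ)) = 1 := powNorm_e1 hp
      refine extreme_of_rank_one hp hTb (frame_rot hp hx1 (by simp)) fy hx1 hy1 ?_ ?_
        fun σ h => eq_zero_of_gprof_le_aprof h2 c0 c1 h
      · ext <;> simp [hT', app, tensor]
      · ext <;> simp [hT', app, tensor, rot]
    · have hy1 := (pnorm_eq_one_iff hp y).1 hy
      obtain ⟨c0, c1, fy⟩ := frame_tang hp hy1 hy0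
      have hx1 : powNorm p ((0 : ℝ), (1 : ℝ)) = 1 := by simp [powNorm, h00]
      refine extreme_of_rank_one hp hTb (frame_rot hp hx1 (by simp)) fy hx1 hy1 ?_ ?_
        fun σ h => eq_zero_of_gprof_le_aprof h2 c0 c1 h
      · ext <;> simp [hT', app, tensor]
      · ext <;> simp [hT', app, tensor, rot]
    · have hx1 := (pnorm_eq_one_iff hp x).1 hx
      obtain ⟨a0, a1, fx⟩ := frame_tang hp hx1 hx0
      have hy1 : powNorm p ((1 : ℝ), (0 : ℝ)) = 1 := powNorm_e1 hp
      obtain ⟨e1, e2⟩ := spow_dot hx1 hx0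
      refine extreme_of_rank_one hp hTb fx (frame_rot hp hy1 (by simp)) hx1 hy1 ?_ ?_
        fun σ h => eq_zero_of_aprof_le_gprof hp h2 a0 a1 h
      · ext <;> simp [hT', app, tensor, e1]
      · ext <;> simp [hT', app, tensor, e2]
    · have hx1 := (pnorm_eq_one_iff hp x).1 hx
      obtain ⟨a0, a1, fx⟩ := frame_tang hp hx1 hx0
      have hy1 : powNorm p ((0 : ℝ), (1 : ℝ)) = 1 := by simp [powNorm, h00]
      obtain ⟨e1, e2⟩ := spow_dot hx1 hx0
      refine extreme_of_rank_one hp hTb fx (frame_rot hp hy1 (by simp)) hx1 hy1 ?_ ?_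
        fun σ h => eq_zero_of_aprof_le_gprof hp h2 a0 a1 h
      · ext <;> simp [hT', app, tensor, e1]
      · ext <;> simp [hT', app, tensor, e2]
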